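/- Let A and U be nonempty sets with the discrete topology, let X ⊆ A^ℤ be a left-finite shift space, and let Ψ : X → U^ℤ be an extended sliding block code of finite degree. Assume that for every sequence (x^k)_{k≥1} in X with Ψ(x^k) → y in U^ℤ there exist a sequence of A-valued functions (h_ℓ)_{ℓ≥0} on finite subsets of ℤ with h_{ℓ+1} extending h_ℓ, and a decreasing sequence (S_ℓ)_{ℓ≥0} of infinite subsets of ℕ, such that for every ℓ ≥ 0 one has x^k ∈ C_X(h_ℓ) for all k ∈ S_ℓ and Ψ(z)_j = y_j for every z ∈ C_X(h_ℓ) and |j| ≤ ℓ, and moreover the set D = ⋃_{ℓ≥0} dom(h_ℓ) is unbounded above in ℤ or bounded below in ℤ (i.e., D is not of the remaining type: bounded above and unbounded below). Then Ψ(X) is a closed subset of U^ℤ, hence a shift space over U. -/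

import Mathlib

open Filter Topology Set

namespace ShiftPaper

/-- The shift map `σ` on the full shift `A^ℤ`: `σ(x)_n = x_{n+1}`. -/
def shiftMap {A : Type*} (x : ℤ → A) : ℤ → A := fun n => x (n + 1)

/-- The `n`-th iterate of the shift: `σ^n(x)_m = x_{m+n}` (for `n : ℤ`). -/
def shiftIter {A : Type*} (n : ℤ) (x : ℤ → A) : ℤ → A := fun m => x (m + n)

/-- A shift space: a nonempty closed shift-invariant subset of the full shift. -/
def IsShiftSpace {A : Type*} [TopologicalSpace A] (X : Set (ℤ → A)) : Prop :=
  X.Nonempty ∧ IsClosed X ∧ shiftMap '' X = X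

/-- The cylinder in `X` determined by the finite set `s ⊆ ℤ` and the values of `h` on `s`:
`C_X(h) = X ∩ {x : x_i = h_i for all i ∈ s}`. -/
def cylX {A : Type*} (X : Set (ℤ → A)) (s : Finset ℤ) (h : ℤ → A) : Set (ℤ → A) :=
  X ∩ {x | ∀ i ∈ s, x i = h i}

/-- A barrier on `X`: a partition of `X` all of whose members are nonempty cylinders in `X`. -/
def IsBarrier {A : Type*} (X : Set (ℤ → A)) (B : Set (Set (ℤ → A))) : Prop :=
  (∀ C ∈ B, C.Nonempty ∧ ∃ (s : Finset ℤ) (h : ℤ → A), C = cylX X s h) ∧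
  (∀ x ∈ X, ∃! C, C ∈ B ∧ x ∈ C)

/-- `Ψ` is induced by the local rule `φ` on the barrier `B`:
`Ψ(x)_n = φ(C)` whenever `C ∈ B` contains `σ^n(x)`. -/
def InducedBy {A U : Type*} (X : Set (ℤ → A)) (Ψ : (ℤ → A) → ℤ → U)
    (B : Set (Set (ℤ → A))) (φ : Set (ℤ → A) → U) : Prop :=
  ∀ x ∈ X, ∀ n : ℤ, ∀ C ∈ B, shiftIter n x ∈ C → Ψ x n = φ C

/-- `Ψ` is an extended sliding block code on `X`. -/
def IsESBC {A U : Type*} (X : Set (ℤ → A)) (Ψ : (ℤ → A) → ℤ → U) : Prop :=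
  ∃ (B : Set (Set (ℤ → A))) (φ : Set (ℤ → A) → U), IsBarrier X B ∧ InducedBy X Ψ B φ

/-- `Ψ` is an extended sliding block code of finite degree: it is induced by a local rule `φ`
on a barrier `B` (so `B` is attached to `Ψ`) such that for each symbol `u` only finitely many
members of `B` have `φ`-value (i.e. `Ψ₀`-value) `u`. -/
def IsFiniteDegreeESBC {A U : Type*} (X : Set (ℤ → A)) (Ψ : (ℤ → A) → ℤ → U) : Prop :=
  ∃ (B : Set (Set (ℤ → A))) (φ : Set (ℤ → A) → U), IsBarrier X B ∧ InducedBy X Ψ B φ ∧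
    ∀ u : U, {C | C ∈ B ∧ φ C = u}.Finite

/-- The data produced by the crucial lemma for a distinguished sequence `x` with
`Ψ(x^k) → y`: a sequence of partial functions `h_ℓ` (with finite domains `s_ℓ`, each
extending the previous one) and a decreasing sequence `S_ℓ` of infinite subsets of `ℕ`,
such that `x^k ∈ C_X(h_ℓ)` for `k ∈ S_ℓ` and `Ψ(z)|_{[-ℓ,ℓ]} = y|_{[-ℓ,ℓ]}` on `C_X(h_ℓ)`. -/
def AssocData {A U : Type*} (X : Set (ℤ → A)) (Ψ : (ℤ → A) → ℤ → U)
    (x : ℕ → ℤ → A) (y : ℤ → U)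
    (s : ℕ → Finset ℤ) (h : ℕ → ℤ → A) (S : ℕ → Set ℕ) : Prop :=
  (∀ ℓ : ℕ, s ℓ ⊆ s (ℓ + 1)) ∧
  (∀ ℓ : ℕ, ∀ i ∈ s ℓ, h (ℓ + 1) i = h ℓ i) ∧
  (∀ ℓ : ℕ, (S ℓ).Infinite) ∧
  (∀ ℓ : ℕ, S (ℓ + 1) ⊆ S ℓ) ∧
  (∀ ℓ : ℕ, ∀ k ∈ S ℓ, x k ∈ cylX X (s ℓ) (h ℓ)) ∧
  (∀ ℓ : ℕ, ∀ z ∈ cylX X (s ℓ) (h ℓ), ∀ j : ℤ, |j| ≤ (ℓ : ℤ) → Ψ z j = y j)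

/-- The symbol `a` belongs to `L₁(X)`: it appears in some point of `X`. -/
def inLetter {A : Type*} (X : Set (ℤ → A)) (a : A) : Prop :=
  ∃ x ∈ X, ∃ i : ℤ, x i = a

/-- The two-letter word `ab` belongs to the language `L(X)`. -/
def inLang2 {A : Type*} (X : Set (ℤ → A)) (a b : A) : Prop :=
  ∃ x ∈ X, ∃ i : ℤ, x i = a ∧ x (i + 1) = b

/-- `X` is right-finite: for each allowed symbol `a`, only finitely many `b` with `ab ∈ L(X)`. -/
def RightFinite {A : Type*} (X : Set (ℤ → A)) : Prop :=
  ∀ a : A, inLetter X a → {b : A | inLang2 X a b}.Finite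

/-- `X` is left-finite: for each allowed symbol `a`, only finitely many `b` with `ba ∈ L(X)`. -/
def LeftFinite {A : Type*} (X : Set (ℤ → A)) : Prop :=
  ∀ a : A, inLetter X a → {b : A | inLang2 X b a}.Finite

end ShiftPaper

open ShiftPaper

/-!
The image is closed because each limit `y = lim Ψ (x k)` is the value of `Ψ` at any point `z` of
`⋂ ℓ, cylX X (s ℓ) (h ℓ)`. If `D = ⋃ ℓ, s ℓ` is finite, then `z = x k` works for suitable `k`. If
`D` is unbounded above, every coordinate `i` has some `d ∈ D` to its right; the symbol of `x k` at
`d` does not depend on `k ∈ S ℓ` for large `ℓ`, so by left-finiteness the symbols at `i` range over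
a finite set, and `x k` converges coordinatewise along any ultrafilter containing every `S ℓ`.
-/

namespace ShiftPaper

section Shift

variable {A : Type*} {X : Set (ℤ → A)} {x : ℤ → A}

theorem shiftMap_injective : Function.Injective (shiftMap : (ℤ → A) → ℤ → A) := by
  intro x y hxy
  funext n
  simpa [shiftMap] using congrFun hxy (n - 1)

theorem shiftIter_zero (x : ℤ → A) : shiftIter 0 x = x := by
  funext m
  simp [shiftIter]

theorem shiftMap_shiftIter (n : ℤ) (x : ℤ → A) :
    shiftMap (shiftIter n x) = shiftIter (n + 1) x := by
  funext m
  simp only [shiftMap, shiftIter, add_assoc, add_comm 1 n]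

theorem shiftIter_shiftMap (n : ℤ) (x : ℤ → A) :
    shiftIter n (shiftMap x) = shiftIter (n + 1) x := by
  funext m
  simp only [shiftMap, shiftIter, add_assoc]

theorem shiftMap_mem_iff (hX : shiftMap '' X = X) : shiftMap x ∈ X ↔ x ∈ X := by
  conv_lhs => rw [← hX]
  exact shiftMap_injective.mem_set_image

theorem shiftIter_mem (hX : shiftMap '' X = X) (hx : x ∈ X) (n : ℤ) : shiftIter n x ∈ X := by
  induction n using Int.induction_on with
  | zero => rwa [shiftIter_zero]
  | succ n ih => rwa [← shiftMap_shiftIter, shiftMap_mem_iff hX]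
  | pred n ih => rwa [← shiftMap_mem_iff hX, shiftMap_shiftIter, sub_add_cancel]

end Shift

section SlidingBlockCode

variable {A U : Type*} {X : Set (ℤ → A)} {Ψ : (ℤ → A) → ℤ → U}

theorem IsFiniteDegreeESBC.isESBC (hΨ : IsFiniteDegreeESBC X Ψ) : IsESBC X Ψ := by
  obtain ⟨B, φ, hB, hφ, -⟩ := hΨ
  exact ⟨B, φ, hB, hφ⟩

theorem IsESBC.map_shiftMap (hΨ : IsESBC X Ψ) (hX : shiftMap '' X = X) {x : ℤ → A} (hx : x ∈ X) :
    Ψ (shiftMap x) = shiftMap (Ψ x) := by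
  obtain ⟨B, φ, hB, hφ⟩ := hΨ
  funext n
  obtain ⟨C, ⟨hC, hxC⟩, -⟩ := hB.2 _ (shiftIter_mem hX hx (n + 1))
  calc
    Ψ (shiftMap x) n = φ C :=
      hφ _ ((shiftMap_mem_iff hX).2 hx) n C hC (by rwa [shiftIter_shiftMap])
    _ = shiftMap (Ψ x) n := (hφ x hx (n + 1) C hC hxC).symm

theorem IsESBC.shiftMap_image_image (hΨ : IsESBC X Ψ) (hX : shiftMap '' X = X) :
    shiftMap '' (Ψ '' X) = Ψ '' X := by
  calc
    shiftMap '' (Ψ '' X) = Ψ '' (shiftMap '' X) := by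
      simp only [image_image]
      exact image_congr fun x hx => (hΨ.map_shiftMap hX hx).symm
    _ = Ψ '' X := by rw [hX]

end SlidingBlockCode

theorem LeftFinite.finite_image_eval {A : Type*} {X : Set (ℤ → A)} (hL : LeftFinite X)
    {i j : ℤ} (hij : i ≤ j) (a : A) : (Function.eval i '' {x ∈ X | x j = a}).Finite := by
  induction i, hij using Int.leInductionDown with
  | base => exact (finite_singleton a).subset (by rintro _ ⟨x, ⟨-, hxa⟩, rfl⟩; exact hxa)
  | pred i _ ih =>
    refine (ih.biUnion (t := fun c => {b | inLang2 X b c}) ?_).subset ?_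
    · rintro _ ⟨x, ⟨hx, -⟩, rfl⟩
      exact hL _ ⟨x, hx, i, rfl⟩
    · rintro _ ⟨x, hx, rfl⟩
      exact mem_biUnion (mem_image_of_mem _ hx) ⟨x, hx.1, i - 1, rfl, by simp⟩

theorem exists_ultrafilter_forall_mem_of_directed {α ι : Type*} [Nonempty ι] {S : ι → Set α}
    (hS : Directed (· ⊇ ·) S) (hne : ∀ i, (S i).Nonempty) :
    ∃ F : Ultrafilter α, ∀ i, S i ∈ F := by
  have : (⨅ i, 𝓟 (S i)).NeBot :=
    iInf_neBot_of_directed' (hS.mono_comp (g := 𝓟) (· ⊇ ·) fun _ _ => principal_mono.2) fun i =>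
      principal_neBot_iff.2 (hne i)
  exact ⟨.of _, fun i => Ultrafilter.of_le _ (mem_iInf_of_mem i (mem_principal_self _))⟩

namespace AssocData

variable {A U : Type*} {X : Set (ℤ → A)} {Ψ : (ℤ → A) → ℤ → U} {x : ℕ → ℤ → A} {y : ℤ → U}
  {s : ℕ → Finset ℤ} {h : ℕ → ℤ → A} {S : ℕ → Set ℕ}

theorem monotone_dom (hA : AssocData X Ψ x y s h S) : Monotone s :=
  monotone_nat_of_le_succ hA.1

theorem antitone_index (hA : AssocData X Ψ x y s h S) : Antitone S :=
  antitone_nat_of_succ_le hA.2.2.2.1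

theorem nonempty_index (hA : AssocData X Ψ x y s h S) (ℓ : ℕ) : (S ℓ).Nonempty :=
  (hA.2.2.1 ℓ).nonempty

theorem mem_cylX (hA : AssocData X Ψ x y s h S) {ℓ k : ℕ} (hk : k ∈ S ℓ) :
    x k ∈ cylX X (s ℓ) (h ℓ) :=
  hA.2.2.2.2.1 ℓ k hk

theorem map_eq_of_forall_mem_cylX (hA : AssocData X Ψ x y s h S) {z : ℤ → A}
    (hz : ∀ ℓ, z ∈ cylX X (s ℓ) (h ℓ)) : Ψ z = y := by
  obtain ⟨-, -, -, -, -, hy⟩ := hA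
  exact funext fun j => hy j.natAbs z (hz _) j (by simp)

theorem exists_forall_mem_cylX_of_finite (hA : AssocData X Ψ x y s h S)
    (hD : (⋃ ℓ, (s ℓ : Set ℤ)).Finite) : ∃ z, ∀ ℓ, z ∈ cylX X (s ℓ) (h ℓ) := by
  obtain ⟨N, hN⟩ : ∃ N, (⋃ ℓ, (s ℓ : Set ℤ)) ⊆ s N := by
    have hdir : Directed (· ⊆ ·) fun ℓ => (s ℓ : Set ℤ) :=
      Monotone.directed_le fun _ _ hle => Finset.coe_subset.2 (hA.monotone_dom hle)
    simpa using hdir.exists_mem_subset_of_finset_subset_biUnion (s := hD.toFinset) (by simp)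
  obtain ⟨k, hk⟩ := hA.nonempty_index N
  refine ⟨x k, fun ℓ => ⟨(hA.mem_cylX hk).1, fun i hi => ?_⟩⟩
  have hiN : i ∈ s N := hN (mem_iUnion.2 ⟨ℓ, hi⟩)
  obtain ⟨m, hm⟩ := hA.nonempty_index (max ℓ N)
  have hmℓ : m ∈ S ℓ := hA.antitone_index (le_max_left ℓ N) hm
  have hmN : m ∈ S N := hA.antitone_index (le_max_right ℓ N) hm
  calc
    x k i = h N i := (hA.mem_cylX hk).2 i hiN
    _ = x m i := ((hA.mem_cylX hmN).2 i hiN).symm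
    _ = h ℓ i := (hA.mem_cylX hmℓ).2 i hi

theorem exists_eventually_eq (hA : AssocData X Ψ x y s h S) (hL : LeftFinite X)
    {F : Ultrafilter ℕ} (hF : ∀ ℓ, S ℓ ∈ F) {i d : ℤ} (hid : i ≤ d)
    (hd : d ∈ ⋃ ℓ, (s ℓ : Set ℤ)) : ∃ a, ∀ᶠ k in F, x k i = a := by
  obtain ⟨ℓ, hdℓ⟩ := mem_iUnion.1 hd
  have hmem : ∀ᶠ k in F, ∃ a ∈ Function.eval i '' {z ∈ X | z d = h ℓ d}, x k i = a := by
    filter_upwards [hF ℓ] with k hk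
    obtain ⟨hkX, hks⟩ := hA.mem_cylX hk
    exact ⟨x k i, mem_image_of_mem _ ⟨hkX, hks d hdℓ⟩, rfl⟩
  obtain ⟨a, -, ha⟩ :=
    (Ultrafilter.eventually_exists_mem_iff (hL.finite_image_eval hid (h ℓ d))).1 hmem
  exact ⟨a, ha⟩

theorem mem_cylX_of_eventually_eq [TopologicalSpace A] (hA : AssocData X Ψ x y s h S)
    (hX : IsClosed X) {F : Filter ℕ} [F.NeBot] (hF : ∀ ℓ, S ℓ ∈ F) {z : ℤ → A}
    (hz : ∀ i, ∀ᶠ k in F, x k i = z i) (ℓ : ℕ) : z ∈ cylX X (s ℓ) (h ℓ) := by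
  have hlim : Tendsto x F (𝓝 z) :=
    tendsto_pi_nhds.2 fun i => tendsto_nhds_of_eventually_eq (hz i)
  refine ⟨hX.mem_of_tendsto hlim ?_, fun i hi => ?_⟩
  · filter_upwards [hF ℓ] with k hk using (hA.mem_cylX hk).1
  · obtain ⟨k, hkz, hk⟩ := ((hz i).and (hF ℓ)).exists
    exact hkz.symm.trans ((hA.mem_cylX hk).2 i hi)

theorem exists_forall_mem_cylX_of_not_bddAbove [TopologicalSpace A]
    (hA : AssocData X Ψ x y s h S) (hX : IsClosed X) (hL : LeftFinite X)
    (hD : ¬ BddAbove (⋃ ℓ, (s ℓ : Set ℤ))) : ∃ z, ∀ ℓ, z ∈ cylX X (s ℓ) (h ℓ) := by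
  obtain ⟨F, hF⟩ :=
    exists_ultrafilter_forall_mem_of_directed hA.antitone_index.directed_ge hA.nonempty_index
  have hlim (i : ℤ) : ∃ a, ∀ᶠ k in F, x k i = a := by
    obtain ⟨d, hd, hid⟩ := not_bddAbove_iff.1 hD i
    exact hA.exists_eventually_eq hL hF hid.le hd
  choose z hz using hlim
  exact ⟨z, hA.mem_cylX_of_eventually_eq hX hF hz⟩

theorem mem_image [TopologicalSpace A] (hA : AssocData X Ψ x y s h S) (hX : IsClosed X)
    (hL : LeftFinite X)
    (hD : ¬ BddAbove (⋃ ℓ, (s ℓ : Set ℤ)) ∨ BddBelow (⋃ ℓ, (s ℓ : Set ℤ))) : y ∈ Ψ '' X := by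
  obtain ⟨z, hz⟩ : ∃ z, ∀ ℓ, z ∈ cylX X (s ℓ) (h ℓ) := by
    by_cases hb : BddAbove (⋃ ℓ, (s ℓ : Set ℤ))
    · have hbelow := hD.resolve_left (not_not.2 hb)
      exact hA.exists_forall_mem_cylX_of_finite (hbelow.finite_of_bddAbove hb)
    · exact hA.exists_forall_mem_cylX_of_not_bddAbove hX hL hb
  exact ⟨z, (hz 0).1, hA.map_eq_of_forall_mem_cylX hz⟩

end AssocData

end ShiftPaper

theorem closed_image_left_finite_general
    {A U : Type*} [TopologicalSpace A] [TopologicalSpace U] [FirstCountableTopology U]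
    {X : Set (ℤ → A)} (hX : IsShiftSpace X) (hL : LeftFinite X)
    {Ψ : (ℤ → A) → ℤ → U} (hΨ : IsESBC X Ψ)
    (hyp : ∀ (x : ℕ → ℤ → A) (y : ℤ → U), (∀ k, x k ∈ X) →
      Tendsto (fun k => Ψ (x k)) atTop (𝓝 y) →
      ∃ (s : ℕ → Finset ℤ) (h : ℕ → ℤ → A) (S : ℕ → Set ℕ),
        AssocData X Ψ x y s h S ∧
        (¬ BddAbove (⋃ ℓ, (s ℓ : Set ℤ)) ∨ BddBelow (⋃ ℓ, (s ℓ : Set ℤ)))) :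
    IsClosed (Ψ '' X) ∧ IsShiftSpace (Ψ '' X) := by
  obtain ⟨hne, hcl, hshift⟩ := hX
  have hclosed : IsClosed (Ψ '' X) := by
    refine IsSeqClosed.isClosed fun u y hu hlim => ?_
    choose x hx hxu using hu
    obtain rfl : (fun k => Ψ (x k)) = u := funext hxu
    obtain ⟨s, h, S, hA, hD⟩ := hyp x y hx hlim
    exact hA.mem_image hcl hL hD
  exact ⟨hclosed, hne.image Ψ, hclosed, hΨ.shiftMap_image_image hshift⟩

/-- STATEMENT 11 (Theorem 3.5 c) of the paper): a finite degree ESBC on a left-finite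
shift space, such that every distinguished sequence admits associated data whose total
domain `D` is unbounded above or bounded below (classes C1–C3 and C5, i.e. not of
class C4), has closed image, hence its image is a shift space. -/
theorem closed_image_left_finite
    {A U : Type*} [TopologicalSpace A] [DiscreteTopology A] [Nonempty A]
    [TopologicalSpace U] [DiscreteTopology U] [Nonempty U]
    (X : Set (ℤ → A)) (hX : IsShiftSpace X)
    (hL : LeftFinite X)
    (Ψ : (ℤ → A) → ℤ → U) (hΨ : IsFiniteDegreeESBC X Ψ)
    (hyp : ∀ (x : ℕ → ℤ → A) (y : ℤ → U), (∀ k, x k ∈ X) →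
      Tendsto (fun k => Ψ (x k)) atTop (𝓝 y) →
      ∃ (s : ℕ → Finset ℤ) (h : ℕ → ℤ → A) (S : ℕ → Set ℕ),
        AssocData X Ψ x y s h S ∧
        (¬ BddAbove (⋃ ℓ, (s ℓ : Set ℤ)) ∨ BddBelow (⋃ ℓ, (s ℓ : Set ℤ)))) :
    IsClosed (Ψ '' X) ∧ IsShiftSpace (Ψ '' X) :=
  closed_image_left_finite_general hX hL hΨ.isESBC hyp
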